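/- Let n ≥ 1 and let λ : Fin n → ℂ lie in the Poincaré domain. Then for every entire function g : (Fin n → ℂ) → ℂ with g(0) = 0 there exists an entire function f : (Fin n → ℂ) → ℂ such that Df(z)(λ·z) = g(z) for every z ∈ ℂⁿ, where λ·z denotes the vector (λ_1 z_1, …, λ_n z_n). (The Lie derivative L_{ξ₀} along the diagonal vector field ξ₀ = ∑_j λ_j z_j ∂/∂z_j surjects onto the entire functions vanishing at 0.) -/

import Mathlib

open scoped BigOperators

/-!
If `0` is not in the convex hull of the spectrum of `A`, then after multiplying `A` by a complex
number its spectrum lies in a half-plane `re z > d > 0`, so that `‖exp (-t A)‖ = O(exp (-d t))` as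
`t → ∞`. As `g` vanishes at `0`, it decays exponentially along every orbit `exp (-t A) z`. Hence
`f z = ∫ t in (0, ∞), g (exp (-t A) z)` converges, the Cauchy estimates allow differentiation
under the integral, and `Df(z)(A z)` is the integral of `-d/dt g (exp (-t A) z)`, that is, `g z`.
For the diagonal operator `A z = (λ₁ z₁, …, λₙ zₙ)` the spectrum consists of the `λⱼ`.
-/

open Filter MeasureTheory Metric NormedSpace Set Topology
open scoped NNReal

section ConvexHull

variable {E : Type*} [AddCommGroup E] [Module ℝ E]

lemma convexHull_range_eq_image_stdSimplex {ι : Type*} [Fintype ι] (p : ι → E) :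
    convexHull ℝ (range p) = (fun w : ι → ℝ ↦ ∑ i, w i • p i) '' stdSimplex ℝ ι := by
  classical
  change _ = Fintype.linearCombination ℝ p '' _
  rw [← convexHull_rangle_single_eq_stdSimplex, LinearMap.image_convexHull, ← range_comp]
  congr 2 with i
  simp [Fintype.linearCombination_apply_single]

/-- By Carathéodory, the hull is a continuous image of `stdSimplex × s ^ (dim E + 1)`. -/
theorem isCompact_convexHull_of_isCompact [TopologicalSpace E] [ContinuousAdd E]
    [ContinuousSMul ℝ E] [FiniteDimensional ℝ E] {s : Set E} (hs : IsCompact s) :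
    IsCompact (convexHull ℝ s) := by
  let ι := Fin (Module.finrank ℝ E + 1)
  suffices h : convexHull ℝ s = (fun q : (ι → ℝ) × (ι → E) ↦ ∑ i, q.1 i • q.2 i) ''
      (stdSimplex ℝ ι ×ˢ univ.pi fun _ ↦ s) by
    rw [h]
    exact ((isCompact_stdSimplex ℝ ι).prod (isCompact_univ_pi fun _ ↦ hs)).image (by fun_prop)
  refine Subset.antisymm (fun x hx ↦ ?_) ?_
  · rw [convexHull_eq_union] at hx
    simp only [mem_iUnion] at hx
    obtain ⟨t, hts, ht, hx⟩ := hx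
    have : Nonempty t := (convexHull_nonempty_iff.1 ⟨x, hx⟩).to_subtype
    have hcard : Fintype.card t ≤ Fintype.card ι := by
      simpa [ι] using ht.card_le_finrank_succ.trans
        (Nat.add_le_add_right (Submodule.finrank_le _) 1)
    obtain ⟨e⟩ := Function.Embedding.nonempty_of_card_le hcard
    let p : ι → E := fun i ↦ (Function.invFun e i : t)
    have hp : range p = t := by
      rw [show p = Subtype.val ∘ Function.invFun e from rfl, range_comp,
        (Function.invFun_surjective e.injective).range_eq, image_univ, Subtype.range_coe]
    rw [← hp, convexHull_range_eq_image_stdSimplex] at hx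
    obtain ⟨w, hw, rfl⟩ := hx
    exact ⟨(w, p), ⟨hw, fun i _ ↦ hts (Subtype.prop _)⟩, rfl⟩
  · rintro _ ⟨⟨w, p⟩, ⟨hw, hp⟩, rfl⟩
    exact (convex_convexHull ℝ s).sum_mem (fun i _ ↦ hw.1 i) hw.2
      fun i _ ↦ subset_convexHull ℝ s (hp i (mem_univ i))

lemma exists_forall_lt_re_mul {S : Set ℂ} (hS : IsCompact S) (h0 : (0 : ℂ) ∉ convexHull ℝ S) :
    ∃ (c : ℂ) (d : ℝ), 0 < d ∧ ∀ z ∈ S, d < (c * z).re := by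
  obtain ⟨f, d, hd, hf⟩ := RCLike.geometric_hahn_banach_point_closed (𝕜 := ℂ)
    (convex_convexHull ℝ S) (isCompact_convexHull_of_isCompact hS).isClosed h0
  refine ⟨f 1, d, by simpa using hd, fun z hz ↦ ?_⟩
  have hfz : f 1 * z = f z := by
    rw [mul_comm, ← smul_eq_mul, ← map_smul, smul_eq_mul, mul_one]
  rw [hfz]
  exact hf z (subset_convexHull ℝ S hz)

/-- After squaring, the inequality asks that `R` exceed the continuous function
`(‖z‖ ^ 2 - d ^ 2) / (2 (re z - d))` on `S`. -/
lemma exists_forall_norm_ofReal_sub_lt {S : Set ℂ} (hS : IsCompact S) {d : ℝ}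
    (hd : ∀ z ∈ S, d < z.re) : ∃ R : ℝ, d < R ∧ ∀ z ∈ S, ‖(R : ℂ) - z‖ < R - d := by
  have hcont : ContinuousOn (fun z : ℂ ↦ (‖z‖ ^ 2 - d ^ 2) / (2 * (z.re - d))) S := by
    refine ContinuousOn.div (by fun_prop) (by fun_prop) fun z hz ↦ ?_
    linarith [hd z hz]
  obtain ⟨C, hC⟩ := hS.exists_bound_of_continuousOn hcont
  refine ⟨max C d + 1, by linarith [le_max_right C d], fun z hz ↦ ?_⟩
  set R := max C d + 1
  have hRC : (‖z‖ ^ 2 - d ^ 2) / (2 * (z.re - d)) < R :=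
    ((le_abs_self _).trans (hC z hz)).trans_lt (by linarith [le_max_left C d])
  rw [div_lt_iff₀ (by linarith [hd z hz])] at hRC
  have hsq : ‖(R : ℂ) - z‖ ^ 2 = R ^ 2 - 2 * R * z.re + ‖z‖ ^ 2 := by
    simp only [Complex.sq_norm, Complex.normSq_apply, Complex.sub_re, Complex.sub_im,
      Complex.ofReal_re, Complex.ofReal_im]
    ring
  refine lt_of_pow_lt_pow_left₀ 2 (by linarith [le_max_right C d]) ?_
  linarith

end ConvexHull

section Semigroup

variable {𝔸 : Type*} [NormedRing 𝔸] [NormedAlgebra ℂ 𝔸]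

/-- The one-parameter semigroup generated by `-a`. When `a` is an operator on a Banach space, it is
the flow, run backwards in time, of the linear vector field `z ↦ a z`. -/
noncomputable def backwardFlow (a : 𝔸) (t : ℝ) : 𝔸 := exp (-(t : ℂ) • a)

/-- `backwardFlow a t` decays exponentially as `t → ∞`, at rate `d` and with constant `K`. -/
def BackwardFlowDecays (a : 𝔸) (K d : ℝ) : Prop :=
  ∀ t : ℝ, 0 ≤ t → ‖backwardFlow a t‖ ≤ K * Real.exp (-(d * t))

@[simp]
lemma backwardFlow_zero (a : 𝔸) : backwardFlow a 0 = 1 := by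
  simp [backwardFlow]

variable [CompleteSpace 𝔸]

lemma hasDerivAt_backwardFlow (a : 𝔸) (t : ℝ) :
    HasDerivAt (backwardFlow a) (-(backwardFlow a t * a)) t := by
  have h := (hasDerivAt_exp_smul_const a (-(t : ℂ))).scomp t Complex.ofRealCLM.hasDerivAt.neg
  exact h.congr_deriv (by simp [backwardFlow])

lemma continuous_backwardFlow (a : 𝔸) : Continuous (backwardFlow a) :=
  continuous_iff_continuousAt.2 fun t ↦ (hasDerivAt_backwardFlow a t).continuousAt

lemma exists_norm_pow_le_of_spectralRadius_lt {b : 𝔸} {r : ℝ≥0}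
    (hr : spectralRadius ℂ b < r) : ∃ K : ℝ, ∀ n, ‖b ^ n‖ ≤ K * (r : ℝ) ^ n := by
  have hr0 : 0 < r := ENNReal.coe_pos.1 (bot_le.trans_lt hr)
  have hroot : ∀ᶠ n : ℕ in atTop, ENNReal.ofReal (‖b ^ n‖ ^ (1 / n : ℝ)) < r :=
    (spectrum.pow_norm_pow_one_div_tendsto_nhds_spectralRadius b).eventually_lt_const hr
  have hpow : (fun n ↦ b ^ n) =O[atTop] fun n ↦ (r : ℝ) ^ n := by
    refine Asymptotics.IsBigO.of_bound 1 ?_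
    filter_upwards [hroot, eventually_ne_atTop 0] with n hn hn0
    have hn_pos : (0 : ℝ) < n := by exact_mod_cast Nat.pos_of_ne_zero hn0
    rw [ENNReal.ofReal_lt_coe_iff (by positivity), one_div,
      Real.rpow_inv_lt_iff_of_pos (norm_nonneg _) r.coe_nonneg hn_pos, Real.rpow_natCast] at hn
    simpa using hn.le
  obtain ⟨K, -, hK⟩ := Asymptotics.bound_of_isBigO_nat_atTop hpow
  exact ⟨K, fun n ↦ by simpa using hK (x := n) (pow_ne_zero n (by exact_mod_cast hr0.ne'))⟩

lemma norm_exp_le_of_forall_norm_pow_le {b : 𝔸} {K r : ℝ} (h : ∀ n, ‖b ^ n‖ ≤ K * r ^ n) :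
    ‖exp b‖ ≤ K * Real.exp r := by
  have hsum : HasSum (fun n : ℕ ↦ K * (r ^ n / n.factorial)) (K * Real.exp r) := by
    rw [Real.exp_eq_exp_ℝ]
    exact (expSeries_div_hasSum_exp r).mul_left K
  rw [← (exp_series_hasSum_exp' (𝕂 := ℂ) b).tsum_eq]
  refine tsum_of_norm_bounded hsum fun n ↦ ?_
  rw [norm_smul, norm_inv, Complex.norm_natCast, ← mul_div_assoc, inv_mul_eq_div]
  gcongr
  exact h n

/-- For large `R` the spectrum lies in the disk of center `R` and radius `R - d`, so that by
Gelfand's formula `‖(R - a) ^ n‖ ≤ K (R - d) ^ n`, and `exp (-t a) = exp (-t R) exp (t (R - a))`. -/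
theorem exists_backwardFlowDecays [Nontrivial 𝔸] {a : 𝔸} {d : ℝ}
    (hd : ∀ z ∈ spectrum ℂ a, d < z.re) : ∃ K, BackwardFlowDecays a K d := by
  obtain ⟨R, hdR, hR⟩ := exists_forall_norm_ofReal_sub_lt (spectrum.isCompact a) hd
  set b := algebraMap ℂ 𝔸 R - a
  lift R - d to ℝ≥0 using (sub_pos.2 hdR).le with r hr
  have hb : spectralRadius ℂ b < r := by
    refine spectrum.spectralRadius_lt_of_forall_lt b fun z hz ↦ ?_
    rw [← spectrum.singleton_sub_eq, singleton_sub] at hz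
    obtain ⟨w, hw, rfl⟩ := hz
    exact hR w hw
  obtain ⟨K, hK⟩ := exists_norm_pow_le_of_spectralRadius_lt hb
  refine ⟨K, fun t ht ↦ ?_⟩
  have hsplit : backwardFlow a t = Complex.exp (-(t * R : ℝ)) • exp ((t : ℂ) • b) := by
    have hadd : -(t : ℂ) • a = algebraMap ℂ 𝔸 (-(t * R : ℝ)) + (t : ℂ) • b := by
      simp only [b, Algebra.algebraMap_eq_smul_one, smul_sub, smul_smul]
      push_cast
      module
    let _ : NormedAlgebra ℚ 𝔸 := .restrictScalars ℚ ℂ 𝔸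
    rw [backwardFlow, hadd, exp_add_of_commute (Algebra.commutes _ _), ← algebraMap_exp_comm,
      ← Complex.exp_eq_exp_ℂ, ← Algebra.smul_def]
  have hexp : ‖exp ((t : ℂ) • b)‖ ≤ K * Real.exp (t * r) := by
    refine norm_exp_le_of_forall_norm_pow_le fun n ↦ ?_
    rw [smul_pow, norm_smul, norm_pow, Complex.norm_of_nonneg ht, mul_pow, mul_left_comm]
    gcongr
    exact hK n
  calc ‖backwardFlow a t‖ = Real.exp (-(t * R)) * ‖exp ((t : ℂ) • b)‖ := by
        rw [hsplit, norm_smul, Complex.norm_exp]; simp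
    _ ≤ Real.exp (-(t * R)) * (K * Real.exp (t * r)) := by gcongr
    _ = K * Real.exp (-(d * t)) := by
        rw [mul_left_comm, ← Real.exp_add, hr]; ring_nf

end Semigroup

section Cauchy

variable {E F : Type*} [NormedAddCommGroup E] [NormedSpace ℂ E] [NormedAddCommGroup F]
  [NormedSpace ℂ F] {f : E → F} {x : E}

lemma eventually_norm_fderiv_le (hf : ∀ᶠ y in 𝓝 x, DifferentiableAt ℂ f y) :
    ∃ M, ∀ᶠ y in 𝓝 x, ‖fderiv ℂ f y‖ ≤ M := by
  have hnear : ∀ᶠ y in 𝓝 x, f y ∈ ball (f x) 1 :=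
    hf.self_of_nhds.continuousAt (ball_mem_nhds _ one_pos)
  obtain ⟨δ, hδ, hball⟩ := eventually_nhds_iff_ball.1 (hf.and hnear)
  refine ⟨2 / (δ / 2), eventually_nhds_iff_ball.2 ⟨δ / 2, half_pos hδ, fun y hy ↦ ?_⟩⟩
  have hsub : ball y (δ / 2) ⊆ ball x δ :=
    ball_subset_ball' (by linarith [mem_ball.1 hy])
  refine Complex.norm_fderiv_le_div_of_mapsTo_ball
    (fun w hw ↦ (hball w (hsub hw)).1.differentiableWithinAt) (fun w hw ↦ ?_) (half_pos hδ)
  have hw := mem_ball.1 (hball w (hsub hw)).2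
  have hy := mem_ball.1 (hball y (hsub (mem_ball_self (half_pos hδ)))).2
  rw [mem_closedBall]
  linarith [dist_triangle_right (f w) (f y) (f x)]

/-- The derivative is locally Lipschitz, by the Cauchy estimate for `w ↦ f (w + v) - f w`, which is
`O(v)` near `x`. -/
theorem continuousAt_fderiv_of_eventually_differentiableAt
    (hf : ∀ᶠ y in 𝓝 x, DifferentiableAt ℂ f y) : ContinuousAt (fderiv ℂ f) x := by
  obtain ⟨M, hM⟩ := eventually_norm_fderiv_le hf
  obtain ⟨δ, hδ, hball⟩ := eventually_nhds_iff_ball.1 (hf.and hM)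
  refine continuousAt_of_locally_lipschitz (half_pos hδ) (2 * M / (δ / 2)) fun y hy ↦ ?_
  have hshift : ∀ w ∈ ball x (δ / 2), w + (y - x) ∈ ball x δ := fun w hw ↦ by
    rw [mem_ball, dist_eq_norm] at *
    calc ‖w + (y - x) - x‖ = ‖(w - x) + (y - x)‖ := by congr 1; abel
      _ ≤ ‖w - x‖ + ‖y - x‖ := norm_add_le _ _
      _ < δ := by linarith
  have hdiff : ∀ w ∈ ball x (δ / 2), HasFDerivAt (fun w ↦ f (w + (y - x)) - f w)
      (fderiv ℂ f (w + (y - x)) - fderiv ℂ f w) w := fun w hw ↦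
    ((hasFDerivAt_comp_add_right _).2 (hball _ (hshift w hw)).1.hasFDerivAt).sub
      (hball w (ball_subset_ball (half_le_self hδ.le) hw)).1.hasFDerivAt
  have hlip : ∀ w ∈ ball x (δ / 2), ‖f (w + (y - x)) - f w‖ ≤ M * ‖y - x‖ := fun w hw ↦ by
    simpa using (convex_ball x δ).norm_image_sub_le_of_norm_fderiv_le (𝕜 := ℂ)
      (fun z hz ↦ (hball z hz).1) (fun z hz ↦ (hball z hz).2)
      (ball_subset_ball (half_le_self hδ.le) hw) (hshift w hw)
  have hx := mem_ball_self (x := x) (half_pos hδ)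
  have hcauchy := Complex.norm_fderiv_le_div_of_mapsTo_ball (R₂ := 2 * (M * ‖y - x‖))
    (fun w hw ↦ (hdiff w hw).differentiableAt.differentiableWithinAt) (fun w hw ↦ by
      rw [mem_closedBall, dist_eq_norm]
      linarith [norm_sub_le (f (w + (y - x)) - f w) (f (x + (y - x)) - f x), hlip w hw, hlip x hx])
    (half_pos hδ)
  rw [(hdiff x hx).fderiv, add_sub_cancel] at hcauchy
  rw [dist_eq_norm, dist_eq_norm]
  exact hcauchy.trans_eq (by ring)

theorem continuous_fderiv_of_differentiable (hf : Differentiable ℂ f) :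
    Continuous (fderiv ℂ f) :=
  continuous_iff_continuousAt.2 fun _ ↦
    continuousAt_fderiv_of_eventually_differentiableAt (.of_forall hf)

end Cauchy

section OrbitIntegral

variable {E F : Type*} [NormedAddCommGroup E] [NormedSpace ℂ E] [NormedAddCommGroup F]
  [NormedSpace ℂ F] {A : E →L[ℂ] E} {K d : ℝ} {g : E → F}

namespace BackwardFlowDecays

lemma norm_apply_le (hA : BackwardFlowDecays A K d) {t : ℝ} (ht : 0 ≤ t) (z : E) :
    ‖backwardFlow A t z‖ ≤ K * Real.exp (-(d * t)) * ‖z‖ :=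
  (backwardFlow A t).le_of_opNorm_le (hA t ht) z

lemma isBigO_apply (hA : BackwardFlowDecays A K d) (z : E) :
    (fun t ↦ backwardFlow A t z) =O[atTop] fun t ↦ Real.exp (-d * t) := by
  refine .of_bound (K * ‖z‖) ?_
  filter_upwards [eventually_ge_atTop 0] with t ht
  rw [Real.norm_eq_abs, Real.abs_exp, mul_right_comm, neg_mul]
  exact hA.norm_apply_le ht z

lemma tendsto_apply (hA : BackwardFlowDecays A K d) (hd : 0 < d) (z : E) :
    Tendsto (fun t ↦ backwardFlow A t z) atTop (𝓝 0) :=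
  (hA.isBigO_apply z).trans_tendsto <|
    Real.tendsto_exp_atBot.comp (tendsto_id.const_mul_atTop_of_neg (neg_lt_zero.2 hd))

variable [CompleteSpace E]

/-- The closure of the orbit of `z` is compact, so `φ` is bounded on a uniform neighborhood of it,
and the decay keeps the orbits of nearby points in this neighborhood. -/
lemma exists_eventually_norm_comp_le (hA : BackwardFlowDecays A K d) (hd : 0 < d) {G : Type*}
    [SeminormedAddCommGroup G] {φ : E → G} (hφ : Continuous φ) (z : E) :
    ∃ M, ∀ᶠ x in 𝓝 z, ∀ t, 0 ≤ t → ‖φ (backwardFlow A t x)‖ ≤ M := by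
  let orbit : ℝ → E := fun t ↦ backwardFlow A |t| z
  have horbit : IsCompact (insert 0 (range orbit)) :=
    ((hA.tendsto_apply hd z).comp (tendsto_norm_cocompact_atTop (E := ℝ)))
      |>.isCompact_insert_range_of_cocompact
        (((continuous_backwardFlow A).comp continuous_abs).clm_apply continuous_const)
  obtain ⟨U, hU, hU_open, hU_bdd⟩ :=
    exists_isOpen_isBounded_image_of_isCompact_of_forall_continuousAt horbit
      fun _ _ ↦ hφ.continuousAt
  obtain ⟨M, hM⟩ := hU_bdd.exists_norm_le
  obtain ⟨ε, hε, hεU⟩ := horbit.exists_thickening_subset_open hU_open hU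
  have hcont : Continuous fun x ↦ K * ‖x - z‖ := by fun_prop
  have hclose : ∀ᶠ x in 𝓝 z, K * ‖x - z‖ < ε :=
    (hcont.tendsto' z 0 (by simp)).eventually_lt_const hε
  refine ⟨M, hclose.mono fun x hx t ht ↦ hM _ (mem_image_of_mem φ (hεU ?_))⟩
  refine mem_thickening_iff.2 ⟨orbit t, mem_insert_of_mem _ (mem_range_self t), ?_⟩
  have hK : 0 ≤ K := by simpa using (norm_nonneg _).trans (hA 0 le_rfl)
  have hexp : Real.exp (-(d * t)) ≤ 1 := Real.exp_le_one_iff.2 (neg_nonpos.2 (by positivity))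
  rw [dist_eq_norm, show orbit t = backwardFlow A t z by simp only [orbit, abs_of_nonneg ht],
    ← map_sub]
  calc ‖backwardFlow A t (x - z)‖ ≤ K * Real.exp (-(d * t)) * ‖x - z‖ := hA.norm_apply_le ht _
    _ ≤ K * ‖x - z‖ := by gcongr; exact mul_le_of_le_one_right hK hexp
    _ < ε := hx

end BackwardFlowDecays

variable [CompleteSpace E]

lemma continuous_backwardFlow_apply (A : E →L[ℂ] E) (z : E) :
    Continuous fun t ↦ backwardFlow A t z :=
  (continuous_backwardFlow A).clm_apply continuous_const

lemma BackwardFlowDecays.integrableOn_comp (hA : BackwardFlowDecays A K d) (hd : 0 < d)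
    (hg : Continuous g) (hg0 : DifferentiableAt ℂ g 0) (h0 : g 0 = 0) (z : E) :
    IntegrableOn (fun t ↦ g (backwardFlow A t z)) (Ioi 0) := by
  have hcont : Continuous fun t ↦ g (backwardFlow A t z) :=
    hg.comp (continuous_backwardFlow_apply A z)
  have hlin : g =O[𝓝 0] fun y ↦ y := by simpa [h0] using hg0.isBigO_sub
  have hdecay : (fun t ↦ g (backwardFlow A t z)) =O[atTop] fun t ↦ Real.exp (-d * t) :=
    (hlin.comp_tendsto (hA.tendsto_apply hd z)).trans (hA.isBigO_apply z)
  have hexp : IntegrableAtFilter (fun t ↦ Real.exp (-d * t)) atTop :=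
    ⟨Ioi 0, Ioi_mem_atTop 0, integrableOn_exp_mul_Ioi (neg_lt_zero.2 hd) 0⟩
  exact ((hcont.locallyIntegrable.locallyIntegrableOn _).integrableOn_of_isBigO_atTop hdecay
    hexp).mono_set Ioi_subset_Ici_self

/-- The candidate solution of `Df(z)(A z) = g z`: the integral of `g` along the backward orbit of
`z`. Where this integral diverges, the value is `0`. -/
noncomputable def orbitIntegral (A : E →L[ℂ] E) (g : E → F) (z : E) : F :=
  ∫ t in Ioi 0, g (backwardFlow A t z)

/-- The derivative at `z` of `x ↦ g (backwardFlow A t x)`. -/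
noncomputable def orbitFDeriv (A : E →L[ℂ] E) (g : E → F) (z : E) (t : ℝ) : E →L[ℂ] F :=
  fderiv ℂ g (backwardFlow A t z) ∘L backwardFlow A t

lemma hasDerivAt_comp_backwardFlow_apply {z : E} {t : ℝ}
    (hg : DifferentiableAt ℂ g (backwardFlow A t z)) :
    HasDerivAt (fun s ↦ g (backwardFlow A s z)) (-(orbitFDeriv A g z t (A z))) t := by
  have hflow : HasDerivAt (fun s ↦ backwardFlow A s z) (-(backwardFlow A t (A z))) t :=
    ((ContinuousLinearMap.apply ℂ E z).restrictScalars ℝ).hasFDerivAt.comp_hasDerivAt t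
      (hasDerivAt_backwardFlow A t)
  exact ((hg.hasFDerivAt.restrictScalars ℝ).comp_hasDerivAt t hflow).congr_deriv
    (map_neg (fderiv ℂ g _) _)

lemma continuous_orbitFDeriv (hg : Differentiable ℂ g) (z : E) :
    Continuous (orbitFDeriv A g z) :=
  ((continuous_fderiv_of_differentiable hg).comp (continuous_backwardFlow_apply A z)).clm_comp
    (continuous_backwardFlow A)

lemma BackwardFlowDecays.exists_eventually_norm_orbitFDeriv_le (hA : BackwardFlowDecays A K d)
    (hd : 0 < d) (hg : Differentiable ℂ g) (z : E) :
    ∃ C, ∀ᶠ x in 𝓝 z, ∀ t, 0 ≤ t → ‖orbitFDeriv A g x t‖ ≤ C * Real.exp (-d * t) := by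
  obtain ⟨M, hM⟩ := hA.exists_eventually_norm_comp_le hd
    (continuous_fderiv_of_differentiable hg) z
  refine ⟨M * K, hM.mono fun x hx t ht ↦ ?_⟩
  calc ‖orbitFDeriv A g x t‖
      ≤ ‖fderiv ℂ g (backwardFlow A t x)‖ * ‖backwardFlow A t‖ :=
        ContinuousLinearMap.opNorm_comp_le _ _
    _ ≤ M * (K * Real.exp (-(d * t))) :=
        mul_le_mul (hx t ht) (hA t ht) (norm_nonneg _) ((norm_nonneg _).trans (hx t ht))
    _ = M * K * Real.exp (-d * t) := by rw [mul_assoc, neg_mul]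

lemma BackwardFlowDecays.integrableOn_orbitFDeriv (hA : BackwardFlowDecays A K d) (hd : 0 < d)
    (hg : Differentiable ℂ g) (z : E) : IntegrableOn (orbitFDeriv A g z) (Ioi 0) := by
  obtain ⟨C, hC⟩ := hA.exists_eventually_norm_orbitFDeriv_le hd hg z
  refine Integrable.mono' ((integrableOn_exp_mul_Ioi (neg_lt_zero.2 hd) 0).const_mul C)
    (continuous_orbitFDeriv hg z).aestronglyMeasurable ?_
  filter_upwards [ae_restrict_mem measurableSet_Ioi] with t ht
  exact hC.self_of_nhds t (le_of_lt ht)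

theorem BackwardFlowDecays.hasFDerivAt_orbitIntegral (hA : BackwardFlowDecays A K d) (hd : 0 < d)
    (hg : Differentiable ℂ g) (h0 : g 0 = 0) (z : E) :
    HasFDerivAt (orbitIntegral A g) (∫ t in Ioi 0, orbitFDeriv A g z t) z := by
  obtain ⟨C, hC⟩ := hA.exists_eventually_norm_orbitFDeriv_le hd hg z
  refine hasFDerivAt_integral_of_dominated_of_fderiv_le hC
    (.of_forall fun x ↦ (hg.continuous.comp
      (continuous_backwardFlow_apply A x)).aestronglyMeasurable)
    (hA.integrableOn_comp hd hg.continuous (hg 0) h0 z)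
    (continuous_orbitFDeriv hg z).aestronglyMeasurable
    ?_ ((integrableOn_exp_mul_Ioi (neg_lt_zero.2 hd) 0).const_mul C)
    (.of_forall fun t x _ ↦ (hg _).hasFDerivAt.comp x (backwardFlow A t).hasFDerivAt)
  filter_upwards [ae_restrict_mem measurableSet_Ioi] with t ht x hx
  exact hx t (le_of_lt ht)

variable [CompleteSpace F]

lemma BackwardFlowDecays.integral_orbitFDeriv_apply (hA : BackwardFlowDecays A K d) (hd : 0 < d)
    (hg : Differentiable ℂ g) (h0 : g 0 = 0) (z : E) :
    (∫ t in Ioi 0, orbitFDeriv A g z t) (A z) = g z := by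
  have hint := hA.integrableOn_orbitFDeriv hd hg z
  have hlim : Tendsto (fun t ↦ g (backwardFlow A t z)) atTop (𝓝 0) :=
    h0 ▸ (hg.continuous.tendsto 0).comp (hA.tendsto_apply hd z)
  have hftc : ∫ t in Ioi 0, -orbitFDeriv A g z t (A z) = 0 - g (backwardFlow A 0 z) :=
    integral_Ioi_of_hasDerivAt_of_tendsto'
      (fun t _ ↦ hasDerivAt_comp_backwardFlow_apply (hg _))
      (hint.apply_continuousLinearMap _).neg hlim
  rw [ContinuousLinearMap.integral_apply hint]
  simpa [integral_neg] using hftc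

end OrbitIntegral

theorem stmt_16_general {E F : Type*} [NormedAddCommGroup E] [NormedSpace ℂ E] [CompleteSpace E]
    [NormedAddCommGroup F] [NormedSpace ℂ F] [CompleteSpace F] (A : E →L[ℂ] E)
    (hA : (0 : ℂ) ∉ convexHull ℝ (spectrum ℂ A)) {g : E → F} (hg : Differentiable ℂ g)
    (h0 : g 0 = 0) : ∃ f : E → F, Differentiable ℂ f ∧ ∀ z, fderiv ℂ f z (A z) = g z := by
  rcases subsingleton_or_nontrivial E with hE | hE
  · exact ⟨g, hg, fun z ↦ by rw [Subsingleton.elim (A z) 0, map_zero, Subsingleton.elim z 0, h0]⟩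
  obtain ⟨c, d, hd, hcd⟩ := exists_forall_lt_re_mul (spectrum.isCompact A) hA
  have hspec : ∀ w ∈ spectrum ℂ (c • A), d < w.re := by
    rw [spectrum.smul_eq_smul c A (spectrum.nonempty A)]
    rintro _ ⟨w, hw, rfl⟩
    exact hcd w hw
  obtain ⟨K, hK⟩ := exists_backwardFlowDecays hspec
  have hf z := hK.hasFDerivAt_orbitIntegral hd hg h0 z
  refine ⟨c • orbitIntegral (c • A) g, fun z ↦ (hf z).differentiableAt.const_smul c, fun z ↦ ?_⟩
  rw [((hf z).const_smul c).fderiv, smul_apply, ← map_smul]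
  exact hK.integral_orbitFDeriv_apply hd hg h0 z

lemma spectrum_mul_pi_subset_range {ι : Type*} [Fintype ι] (l : ι → ℂ) :
    spectrum ℂ (ContinuousLinearMap.mul ℂ (ι → ℂ) l) ⊆ range l := by
  rw [ContinuousLinearMap.spectrum_eq]
  refine (AlgHom.spectrum_apply_subset (Algebra.lmul ℂ (ι → ℂ)) l).trans ?_
  rw [Pi.spectrum_eq, iUnion_subset_iff]
  intro i
  rw [show l i = algebraMap ℂ ℂ (l i) from rfl, spectrum.scalar_eq, singleton_subset_iff]
  exact mem_range_self i

/-- If `λ` is in the Poincaré domain, then for every entire `g` vanishing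
at `0` there is an entire `f` with `Df(z)(λ·z) = g(z)` for every `z`. -/
theorem stmt_16 (n : ℕ) (hn : 1 ≤ n) (l : Fin n → ℂ)
    (hP : (0 : ℂ) ∉ convexHull ℝ (Set.range l)) :
    ∀ g : (Fin n → ℂ) → ℂ, Differentiable ℂ g → g 0 = 0 →
      ∃ f : (Fin n → ℂ) → ℂ, Differentiable ℂ f ∧
        ∀ z : Fin n → ℂ, fderiv ℂ f z (fun j => l j * z j) = g z := fun _ ↦
  stmt_16_general (ContinuousLinearMap.mul ℂ (Fin n → ℂ) l)
    fun h ↦ hP (convexHull_mono (spectrum_mul_pi_subset_range l) h)
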